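/- arXiv:2603.21292 — 3 statements merged into one kernel-verified Lean document; each statement's English description precedes it below -/
import Mathlib

section
/- Let q be an odd prime power and let E ⊆ F_q² be nonempty. If |E|² ≥ q²·K_E, then |Δ_P(E)| ≥ q/2. -/
open Finset

/-- The parabolic distance set of `E ⊆ F_q²`. -/
def parabolicDistSet {F : Type*} [Field F] [DecidableEq F] (E : Finset (F × F)) :
    Finset F :=
  (E ×ˢ E).image fun z : (F × F) × (F × F) => (z.1.2 - z.2.2) + (z.1.1 - z.2.1) ^ 2

/-- The size of the largest vertical fiber of `E ⊆ F_q²`. -/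
def maxVertFiber {F : Type*} [Fintype F] [DecidableEq F] (E : Finset (F × F)) : ℕ :=
  Finset.univ.sup fun u : F => (E.filter fun p => p.1 = u).card

section helpers

variable {F : Type*} [Field F] [Fintype F] [DecidableEq F]

open ComplexConjugate in
lemma pd_parseval (ψ : AddChar F ℂ) (hψ : ψ.IsPrimitive) {ι : Type*} (I : Finset ι)
    (w : ι → ℂ) (φ : ι → F) :
    (((∑ s : F, ‖∑ i ∈ I, w i * ψ (s * φ i)‖ ^ 2 : ℝ)) : ℂ) =
      (Fintype.card F : ℂ) * ∑ i ∈ I, ∑ j ∈ I, if φ i = φ j then w i * conj (w j) else 0 := by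
  push_cast
  have h1 : ∀ s : F, ((‖∑ i ∈ I, w i * ψ (s * φ i)‖ : ℂ)) ^ 2 =
      ∑ i ∈ I, ∑ j ∈ I, w i * conj (w j) * ψ (s * (φ i - φ j)) := by
    intro s
    rw [← Complex.mul_conj', map_sum, Finset.sum_mul_sum]
    refine Finset.sum_congr rfl fun i _ => Finset.sum_congr rfl fun j _ => ?_
    rw [map_mul (starRingEnd ℂ), mul_sub, sub_eq_add_neg, AddChar.map_add_eq_mul, AddChar.map_neg_eq_conj]
    ring
  simp_rw [h1]
  rw [Finset.sum_comm, Finset.mul_sum]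
  refine Finset.sum_congr rfl fun i _ => ?_
  rw [Finset.sum_comm, Finset.mul_sum]
  refine Finset.sum_congr rfl fun j _ => ?_
  rw [← Finset.mul_sum, AddChar.sum_mulShift _ hψ]
  by_cases h : φ i = φ j
  · simp [h, mul_comm]
  · simp [h, sub_eq_zero]

lemma pd_parseval_inj (ψ : AddChar F ℂ) (hψ : ψ.IsPrimitive) {ι : Type*} (I : Finset ι)
    (w : ι → ℂ) (φ : ι → F) (hφ : Set.InjOn φ I) :
    ∑ s : F, ‖∑ i ∈ I, w i * ψ (s * φ i)‖ ^ 2 =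
      (Fintype.card F : ℝ) * ∑ i ∈ I, ‖w i‖ ^ 2 := by
  classical
  apply Complex.ofReal_injective
  rw [pd_parseval ψ hψ]
  push_cast
  congr 1
  refine Finset.sum_congr rfl fun i hi => ?_
  rw [Finset.sum_eq_single i]
  · simp [Complex.mul_conj']
  · intro j hj hji
    rw [if_neg]
    intro h
    exact hji (hφ hj hi h.symm)
  · intro h; exact absurd hi h

lemma pd_parseval_count (ψ : AddChar F ℂ) (hψ : ψ.IsPrimitive) {ι : Type*} (I : Finset ι)
    (φ : ι → F) :
    ∑ s : F, ‖∑ i ∈ I, ψ (s * φ i)‖ ^ 2 =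
      (Fintype.card F : ℝ) * ∑ t : F, ((I.filter fun i => φ i = t).card : ℝ) ^ 2 := by
  apply Complex.ofReal_injective
  have h := pd_parseval ψ hψ I (fun _ => 1) φ
  simp only [one_mul, map_one, mul_one] at h
  rw [h]
  push_cast
  congr 1
  rw [← Finset.sum_fiberwise I φ]
  refine Finset.sum_congr rfl fun t _ => ?_
  rw [sq, ← nsmul_eq_mul]
  refine Finset.sum_eq_card_nsmul fun i hi => ?_
  rw [Finset.sum_boole]
  simp only [Finset.mem_filter] at hi
  simp [hi.2, eq_comm]

lemma pd_bilinear (ψ : AddChar F ℂ) (hψ : ψ.IsPrimitive) (a b : F → ℂ) (c : F) (hc : c ≠ 0) :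
    ‖∑ u, ∑ v, a u * (b v * ψ (u * (c * v)))‖ ^ 2 ≤
      (Fintype.card F : ℝ) * (∑ u, ‖a u‖ ^ 2) * ∑ v, ‖b v‖ ^ 2 := by
  have hp := pd_parseval_inj ψ hψ Finset.univ b (fun v => c * v)
    (fun x _ y _ h => mul_left_cancel₀ hc h)
  calc ‖∑ u, ∑ v, a u * (b v * ψ (u * (c * v)))‖ ^ 2
      ≤ (∑ u, ‖a u‖ * ‖∑ v, b v * ψ (u * (c * v))‖) ^ 2 := by
        gcongr
        refine (norm_sum_le _ _).trans (Finset.sum_le_sum fun u _ => ?_)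
        rw [← Finset.mul_sum, norm_mul]
    _ ≤ (∑ u, ‖a u‖ ^ 2) * ∑ u, ‖∑ v, b v * ψ (u * (c * v))‖ ^ 2 :=
        Finset.sum_mul_sq_le_sq_mul_sq _ _ _
    _ = _ := by rw [hp]; ring

open ComplexConjugate in
lemma pd_S_bound (ψ : AddChar F ℂ) (hψ : ψ.IsPrimitive) (h2 : (2 : F) ≠ 0) (E : Finset (F × F))
    (s : F) (hs : s ≠ 0) :
    ‖∑ z ∈ E ×ˢ E, ψ (s * ((z.1.2 - z.2.2) + (z.1.1 - z.2.1) ^ 2))‖ ^ 2 ≤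
      (Fintype.card F : ℝ) *
        (∑ u, ‖∑ x ∈ E.filter (fun p => p.1 = u), ψ (s * x.2)‖ ^ 2) ^ 2 := by
  set T : F → ℂ := fun u => ∑ x ∈ E.filter (fun p => p.1 = u), ψ (s * x.2) with hT
  have hb := pd_bilinear ψ hψ (fun u => ψ (s * u ^ 2) * T u) (fun v => ψ (s * v ^ 2) * conj (T v))
    (-(2 * s)) (neg_ne_zero.mpr (mul_ne_zero h2 hs))
  simp only [norm_mul, AddChar.norm_apply, one_mul, RCLike.norm_conj] at hb
  rw [sq (∑ u, _), ← mul_assoc]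
  convert hb using 3
  rw [Finset.sum_product, ← Finset.sum_fiberwise E (fun p => p.1)]
  refine Finset.sum_congr rfl fun u _ => ?_
  have hin : ∀ x ∈ E.filter (fun p => p.1 = u),
      ∑ y ∈ E, ψ (s * ((x.2 - y.2) + (x.1 - y.1) ^ 2)) =
      ∑ v, ψ (s * u ^ 2) * ψ (s * x.2) *
        (ψ (s * v ^ 2) * conj (T v) * ψ (u * (-(2 * s) * v))) := by
    intro x hx
    rw [← Finset.sum_fiberwise E (fun p => p.1)]
    refine Finset.sum_congr rfl fun v _ => ?_
    simp only [hT, map_sum, Finset.mul_sum, Finset.sum_mul]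
    refine Finset.sum_congr rfl fun y hy => ?_
    have hx1 : x.1 = u := (Finset.mem_filter.mp hx).2
    have hy1 : y.1 = v := (Finset.mem_filter.mp hy).2
    rw [← AddChar.map_neg_eq_conj, ← AddChar.map_add_eq_mul, ← AddChar.map_add_eq_mul,
      ← AddChar.map_add_eq_mul, ← AddChar.map_add_eq_mul, hx1, hy1]
    congr 1
    ring
  rw [Finset.sum_congr rfl hin, Finset.sum_comm]
  refine Finset.sum_congr rfl fun v _ => ?_
  rw [← Finset.sum_mul, ← Finset.mul_sum]

end helpers

theorem parabolic_distance_positive_proportion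
    {F : Type*} [Field F] [Fintype F] [DecidableEq F]
    (hq : Odd (Fintype.card F))
    (E : Finset (F × F)) (hE : E.Nonempty)
    (hsize : E.card ^ 2 ≥ (Fintype.card F) ^ 2 * maxVertFiber E) :
    ((parabolicDistSet E).card : ℝ) ≥ (Fintype.card F : ℝ) / 2 := by
  have h2 : (2 : F) ≠ 0 := by
    apply Ring.two_ne_zero
    intro h
    have := FiniteField.even_card_of_char_two h
    rw [Nat.odd_iff] at hq
    omega
  obtain ⟨ψ, hψ⟩ : ∃ ψ : AddChar F ℂ, ψ.IsPrimitive :=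
    ⟨_, AddChar.FiniteField.primitiveChar_to_Complex_isPrimitive F⟩
  set q : ℝ := (Fintype.card F : ℝ) with hqdef
  set K : ℝ := (maxVertFiber E : ℝ) with hK
  set N : ℝ := (E.card : ℝ) with hN
  have hqpos : 0 < q := by
    rw [hqdef]; exact_mod_cast Fintype.card_pos
  have hNpos : 0 < N := by
    rw [hN]; exact_mod_cast hE.card_pos
  have hsz : q ^ 2 * K ≤ N ^ 2 := by
    rw [hqdef, hK, hN]; exact_mod_cast hsize
  let d : (F × F) × (F × F) → F := fun z => (z.1.2 - z.2.2) + (z.1.1 - z.2.1) ^ 2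
  let fib : F → Finset (F × F) := fun u => E.filter (fun p => p.1 = u)
  let A : F → ℝ := fun s => ∑ u, ‖∑ x ∈ fib u, ψ (s * x.2)‖ ^ 2
  let S : F → ℂ := fun s => ∑ z ∈ E ×ˢ E, ψ (s * d z)
  let ν : F → ℝ := fun t => (((E ×ˢ E).filter fun z => d z = t).card : ℝ)
  have hA0 : ∀ s, 0 ≤ A s := fun s => Finset.sum_nonneg fun u _ => by positivity
  have hfibsum : ∑ u, ((fib u).card : ℝ) = N := by
    rw [hN, Finset.card_eq_sum_card_fiberwise (f := fun p : F × F => p.1) (t := Finset.univ)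
      (fun _ _ => Finset.mem_coe.mpr (Finset.mem_univ _))]
    push_cast
    rfl
  have hfibK : ∀ u, ((fib u).card : ℝ) ≤ K := by
    intro u
    rw [hK]
    exact_mod_cast Finset.le_sup (f := fun u : F => (E.filter fun p => p.1 = u).card)
      (Finset.mem_univ u)
  have hAK : ∀ s, A s ≤ K * N := by
    intro s
    rw [← hfibsum, Finset.mul_sum]
    refine Finset.sum_le_sum fun u _ => ?_
    have h1 : ‖∑ x ∈ fib u, ψ (s * x.2)‖ ≤ (fib u).card := by
      refine (norm_sum_le _ _).trans ?_
      simp [AddChar.norm_apply]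
    calc _ ≤ ((fib u).card : ℝ) ^ 2 := by gcongr
      _ = ((fib u).card : ℝ) * (fib u).card := sq _
      _ ≤ K * (fib u).card := by gcongr; exact hfibK u
  have hAsum : ∑ s, A s = q * N := by
    rw [Finset.sum_comm, ← hfibsum, Finset.mul_sum]
    refine Finset.sum_congr rfl fun u _ => ?_
    have := pd_parseval_inj ψ hψ (fib u) (fun _ => 1) (fun x => x.2) (by
      intro x hx y hy h
      simp only [fib, Finset.coe_filter, Set.mem_ofPred_eq] at hx hy
      exact Prod.ext (hx.2.trans hy.2.symm) h)
    simpa using this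
  have hSb : ∀ s, s ≠ 0 → ‖S s‖ ^ 2 ≤ q * (K * N) * A s := by
    intro s hs
    refine (pd_S_bound ψ hψ h2 E s hs).trans ?_
    change q * (A s) ^ 2 ≤ _
    rw [sq, mul_assoc q]
    exact mul_le_mul_of_nonneg_left (mul_le_mul_of_nonneg_right (hAK s) (hA0 s)) hqpos.le
  have hS0 : ‖S 0‖ ^ 2 = N ^ 4 := by
    simp [S, hN]
    ring
  have hKN : 0 ≤ K * N := (hA0 0).trans (hAK 0)
  have hSsum : ∑ s, ‖S s‖ ^ 2 ≤ 2 * N ^ 4 := by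
    have hle : ∑ s, ‖S s‖ ^ 2 ≤ ∑ s, ((if s = 0 then N ^ 4 else 0) + q * (K * N) * A s) := by
      refine Finset.sum_le_sum fun s _ => ?_
      by_cases h : s = 0
      · rw [if_pos h, h, hS0]
        have := hA0 0
        have : 0 ≤ q * (K * N) * A 0 := by positivity
        linarith
      · rw [if_neg h, zero_add]; exact hSb s h
    rw [Finset.sum_add_distrib, ← Finset.mul_sum, hAsum] at hle
    simp only [Finset.sum_ite_eq', Finset.mem_univ, if_true] at hle
    nlinarith [mul_le_mul_of_nonneg_right hsz (sq_nonneg N)]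
  have hcount : ∑ s, ‖S s‖ ^ 2 = q * ∑ t, ν t ^ 2 := pd_parseval_count ψ hψ (E ×ˢ E) d
  have hνsum : ∑ t ∈ parabolicDistSet E, ν t = N ^ 2 := by
    have := Finset.card_eq_sum_card_image d (E ×ˢ E)
    have h' : ((E ×ˢ E).card : ℝ) = ∑ t ∈ parabolicDistSet E, ν t := by
      rw [this]; push_cast; rfl
    rw [← h', Finset.card_product]; push_cast; ring
  have hcs : (N ^ 2) ^ 2 ≤ ((parabolicDistSet E).card : ℝ) * ∑ t, ν t ^ 2 := by
    rw [← hνsum]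
    refine (sq_sum_le_card_mul_sum_sq).trans ?_
    gcongr
    exact Finset.subset_univ _
  rw [ge_iff_le, div_le_iff₀ two_pos]
  have hN4 : 0 < N ^ 4 := by positivity
  refine le_of_mul_le_mul_right ?_ hN4
  set D : ℝ := ((parabolicDistSet E).card : ℝ)
  have hD : 0 ≤ D := Nat.cast_nonneg _
  calc q * N ^ 4 = q * (N ^ 2) ^ 2 := by ring
    _ ≤ q * (D * ∑ t, ν t ^ 2) := by gcongr
    _ = D * (q * ∑ t, ν t ^ 2) := by ring
    _ ≤ D * (2 * N ^ 4) := by rw [← hcount]; gcongr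
    _ = D * 2 * N ^ 4 := by ring
end

section
/- Let q be an odd prime power and E ⊆ F_q² with n := |E|. Then Σ_{t∈F_q} ν(t)² ≤ n⁴/q + q·𝓔_fib(E), where 𝓔_fib(E) is the fiber alignment energy of E. -/
open Finset

/-- The additive energy `E₊(P,Q) = #{(x,x',y,y') ∈ P×P×Q×Q : x+y = x'+y'}`. -/
def additiveEnergyPQ {F : Type*} [Add F] [DecidableEq F] (P Q : Finset F) : ℕ :=
  (((P ×ˢ P) ×ˢ (Q ×ˢ Q)).filter fun z => z.1.1 + z.2.1 = z.1.2 + z.2.2).card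

/-- The vertical fiber `E_u = {y : (u,y) ∈ E}` of `E ⊆ F_q²`. -/
def vertFiber {F : Type*} [Fintype F] [DecidableEq F] (E : Finset (F × F)) (u : F) :
    Finset F :=
  Finset.univ.filter fun y : F => (u, y) ∈ E

/-- The fiber alignment energy `𝓔_fib(E) = Σ_{u,u'} E₊(E_u, E_{u'})`. -/
def fiberEnergy {F : Type*} [Add F] [Fintype F] [DecidableEq F] (E : Finset (F × F)) : ℕ :=
  ∑ u : F, ∑ u' : F, additiveEnergyPQ (vertFiber E u) (vertFiber E u')

/-- The parabolic distance counting function `ν(t)` of `E ⊆ F_q²`. -/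
def parabolicNu {F : Type*} [Field F] [DecidableEq F] (E : Finset (F × F)) (t : F) : ℕ :=
  ((E ×ˢ E).filter fun z : (F × F) × (F × F) =>
    (z.1.2 - z.2.2) + (z.1.1 - z.2.1) ^ 2 = t).card



theorem aux_norm {F : Type*} [Field F] [Fintype F] (ψ : AddChar F ℂ) (x : F) : ‖ψ x‖ = 1 :=
  AddChar.norm_apply ψ x

theorem aux_orth {F : Type*} [Field F] [Fintype F] [DecidableEq F] {ψ : AddChar F ℂ}
    (hψ : ψ.IsPrimitive) {ι : Type*} (S : Finset ι) (φ : ι → F) (c : ι → ℂ) :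
    ((∑ s : F, ‖∑ i ∈ S, c i * ψ (s * φ i)‖ ^ 2 : ℝ) : ℂ) =
      (Fintype.card F : ℂ) * ∑ i ∈ S, ∑ j ∈ S,
        if φ i = φ j then c i * (starRingEnd ℂ) (c j) else 0 := by
  push_cast
  have h : ∀ s : F, ((‖∑ i ∈ S, c i * ψ (s * φ i)‖ : ℂ)) ^ 2 =
      ∑ i ∈ S, ∑ j ∈ S, c i * (starRingEnd ℂ) (c j) * ψ (s * (φ i - φ j)) := by
    intro s
    rw [← Complex.mul_conj', map_sum, Finset.sum_mul_sum]
    refine Finset.sum_congr rfl fun i _ => Finset.sum_congr rfl fun j _ => ?_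
    rw [map_mul (starRingEnd ℂ), ← AddChar.map_neg_eq_conj, mul_sub, sub_eq_add_neg, AddChar.map_add_eq_mul]
    ring
  simp_rw [h]
  rw [Finset.sum_comm, Finset.mul_sum]
  refine Finset.sum_congr rfl fun i _ => ?_
  rw [Finset.sum_comm, Finset.mul_sum]
  refine Finset.sum_congr rfl fun j _ => ?_
  rw [← Finset.mul_sum, AddChar.sum_mulShift _ hψ]
  simp only [sub_eq_zero]
  split_ifs <;> simp [mul_comm]

theorem aux_count {F : Type*} [Field F] [Fintype F] [DecidableEq F] {ψ : AddChar F ℂ}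
    (hψ : ψ.IsPrimitive) {ι : Type*} (S : Finset ι) (φ : ι → F) :
    (∑ s : F, ‖∑ i ∈ S, ψ (s * φ i)‖ ^ 2 : ℝ) =
      (Fintype.card F : ℝ) * (((S ×ˢ S).filter fun z => φ z.1 = φ z.2).card : ℝ) := by
  have h := aux_orth hψ S φ (fun _ => 1)
  simp only [one_mul, map_one] at h
  rw [← Finset.sum_product', Finset.sum_boole] at h
  exact_mod_cast h

theorem aux_op {F : Type*} [Field F] [Fintype F] [DecidableEq F] {ψ : AddChar F ℂ}
    (hψ : ψ.IsPrimitive) (h2 : (2 : F) ≠ 0) (s : F) (hs : s ≠ 0) (g : F → ℂ) :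
    (∑ u : F, ‖∑ a : F, g a * ψ (s * (u - a) ^ 2)‖ ^ 2 : ℝ) =
      (Fintype.card F : ℝ) * ∑ a : F, ‖g a‖ ^ 2 := by
  have h := aux_orth hψ Finset.univ (fun a => -2 * s * a) (fun a => g a * ψ (s * a ^ 2))
  have e : ∀ u : F, ‖∑ a : F, g a * ψ (s * (u - a) ^ 2)‖ =
      ‖∑ a : F, g a * ψ (s * a ^ 2) * ψ (u * (-2 * s * a))‖ := by
    intro u
    have : ∑ a : F, g a * ψ (s * (u - a) ^ 2) =
        ψ (s * u ^ 2) * ∑ a : F, g a * ψ (s * a ^ 2) * ψ (u * (-2 * s * a)) := by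
      rw [Finset.mul_sum]
      refine Finset.sum_congr rfl fun a _ => ?_
      have : s * (u - a) ^ 2 = s * u ^ 2 + (s * a ^ 2 + u * (-2 * s * a)) := by ring
      rw [this, AddChar.map_add_eq_mul, AddChar.map_add_eq_mul]
      ring
    rw [this, norm_mul, aux_norm, one_mul]
  simp_rw [e]
  have hinj : ∀ a b : F, (-2 * s * a = -2 * s * b) ↔ a = b := by
    intro a b
    exact mul_right_inj' (mul_ne_zero (neg_ne_zero.mpr h2) hs)
  simp only [hinj, Finset.sum_ite_eq, Finset.mem_univ, if_true, Complex.mul_conj', norm_mul,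
    aux_norm, mul_one] at h
  exact_mod_cast h

theorem aux_bilin {F : Type*} [Field F] [Fintype F] [DecidableEq F] {ψ : AddChar F ℂ}
    (hψ : ψ.IsPrimitive) (h2 : (2 : F) ≠ 0) (s : F) (hs : s ≠ 0) (f g : F → ℂ)
    (hfg : ∀ u, ‖g u‖ = ‖f u‖) :
    ‖∑ u : F, f u * ∑ a : F, g a * ψ (s * (u - a) ^ 2)‖ ^ 2 ≤
      (Fintype.card F : ℝ) * (∑ u : F, ‖f u‖ ^ 2) ^ 2 := by
  have h1 : ‖∑ u : F, f u * ∑ a : F, g a * ψ (s * (u - a) ^ 2)‖ ≤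
      ∑ u : F, ‖f u‖ * ‖∑ a : F, g a * ψ (s * (u - a) ^ 2)‖ := by
    refine (norm_sum_le _ _).trans (le_of_eq ?_)
    simp_rw [norm_mul]
  have h3 := pow_le_pow_left₀ (norm_nonneg _) h1 2
  refine h3.trans ((Finset.sum_mul_sq_le_sq_mul_sq _ _ _).trans (le_of_eq ?_))
  rw [aux_op hψ h2 s hs]
  simp_rw [hfg]
  ring

theorem aux_fiber {F : Type*} [Field F] [Fintype F] [DecidableEq F] (E : Finset (F × F))
    (G : F → F → ℂ) :
    ∑ x ∈ E, G x.1 x.2 = ∑ u : F, ∑ y ∈ vertFiber E u, G u y := by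
  simp only [vertFiber, Finset.sum_filter]
  rw [← Fintype.sum_prod_type' (f := fun u y => if (u, y) ∈ E then G u y else 0)]
  simp

theorem second_moment_fiber_energy_bound
    {F : Type*} [Field F] [Fintype F] [DecidableEq F]
    (hq : Odd (Fintype.card F))
    (E : Finset (F × F)) :
    (∑ t : F, (parabolicNu E t : ℝ) ^ 2) ≤
      (E.card : ℝ) ^ 4 / (Fintype.card F : ℝ) +
        (Fintype.card F : ℝ) * (fiberEnergy E : ℝ) := by
  have h2 : (2 : F) ≠ 0 := by
    refine Ring.two_ne_zero fun h => ?_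
    have := FiniteField.even_card_of_char_two h
    rw [Nat.odd_iff] at hq
    omega
  have hq0 : (0 : ℝ) < Fintype.card F := by exact_mod_cast Fintype.card_pos
  let ψ : AddChar F ℂ := AddChar.FiniteField.primitiveChar_to_Complex F
  have hψ : ψ.IsPrimitive := AddChar.FiniteField.primitiveChar_to_Complex_isPrimitive F
  let d : (F × F) × (F × F) → F := fun z => (z.1.2 - z.2.2) + (z.1.1 - z.2.1) ^ 2
  -- the Fourier transform of `ν`
  let N : F → ℂ := fun s => ∑ z ∈ E ×ˢ E, ψ (s * d z)
  let f : F → F → ℂ := fun s u => ∑ y ∈ vertFiber E u, ψ (s * y)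
  have hν : (∑ t : F, (parabolicNu E t : ℝ) ^ 2) =
      ((((E ×ˢ E) ×ˢ (E ×ˢ E)).filter fun z => d z.1 = d z.2).card : ℝ) := by
    rw [Finset.card_eq_sum_card_fiberwise (f := fun z => d z.1) (t := Finset.univ)
      (fun _ _ => Finset.mem_coe.2 (Finset.mem_univ _))]
    push_cast
    refine Finset.sum_congr rfl fun t _ => ?_
    rw [sq, ← Nat.cast_mul]
    congr 1
    unfold parabolicNu
    rw [← Finset.card_product]
    congr 1
    ext z
    simp only [Finset.mem_product, Finset.mem_filter, d]
    constructor
    · rintro ⟨⟨h1, h2⟩, h3, h4⟩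
      exact ⟨⟨⟨h1, h3⟩, h2.trans h4.symm⟩, h2⟩
    · rintro ⟨⟨⟨h1, h3⟩, h4⟩, h5⟩
      exact ⟨⟨h1, h5⟩, h3, h4.symm.trans h5⟩
  have hP : (∑ s : F, ‖N s‖ ^ 2 : ℝ) =
      (Fintype.card F : ℝ) * ∑ t : F, (parabolicNu E t : ℝ) ^ 2 := by
    rw [hν]
    exact aux_count hψ (E ×ˢ E) d
  have hN0 : ‖N 0‖ ^ 2 = (E.card : ℝ) ^ 4 := by
    simp only [N, zero_mul, AddChar.map_zero_eq_one, Finset.sum_const, Finset.card_product,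
      nsmul_eq_mul, mul_one, Complex.norm_natCast]
    push_cast
    ring
  have hNf : ∀ s, N s = ∑ u : F, f s u * ∑ a : F,
      (starRingEnd ℂ) (f s a) * ψ (s * (u - a) ^ 2) := by
    intro s
    simp only [N, d]
    rw [Finset.sum_product]
    have e1 : ∀ x : F × F, ∑ y ∈ E, ψ (s * (x.2 - y.2 + (x.1 - y.1) ^ 2)) =
        ψ (s * x.2) * ∑ a : F, (starRingEnd ℂ) (f s a) * ψ (s * (x.1 - a) ^ 2) := by
      intro x
      rw [aux_fiber E (fun a b => ψ (s * (x.2 - b + (x.1 - a) ^ 2))), Finset.mul_sum]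
      refine Finset.sum_congr rfl fun a _ => ?_
      simp only [f, map_sum, Finset.sum_mul, Finset.mul_sum]
      refine Finset.sum_congr rfl fun b _ => ?_
      rw [← AddChar.map_neg_eq_conj, ← AddChar.map_add_eq_mul, ← AddChar.map_add_eq_mul]
      congr 1
      ring
    simp_rw [e1]
    rw [aux_fiber E (fun u v => ψ (s * v) *
      ∑ a : F, (starRingEnd ℂ) (f s a) * ψ (s * (u - a) ^ 2))]
    simp only [f, Finset.sum_mul]
  have hNs : ∀ s, s ≠ 0 → ‖N s‖ ^ 2 ≤ (Fintype.card F : ℝ) * (∑ u : F, ‖f s u‖ ^ 2) ^ 2 := by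
    intro s hs
    rw [hNf]
    exact aux_bilin hψ h2 s hs (f s) _ (fun u => RCLike.norm_conj _)
  have hE : (∑ s : F, (∑ u : F, ‖f s u‖ ^ 2) ^ 2 : ℝ) =
      (Fintype.card F : ℝ) * (fiberEnergy E : ℝ) := by
    unfold fiberEnergy
    push_cast
    simp_rw [sq (∑ u : F, _), Finset.sum_mul_sum]
    rw [Finset.sum_comm, Finset.mul_sum]
    refine Finset.sum_congr rfl fun u _ => ?_
    rw [Finset.sum_comm, Finset.mul_sum]
    refine Finset.sum_congr rfl fun v _ => ?_
    have := aux_count hψ (vertFiber E u ×ˢ vertFiber E v) (fun z => z.1 + z.2)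
    have e2 : ∀ s : F, ‖f s u‖ ^ 2 * ‖f s v‖ ^ 2 =
        ‖∑ z ∈ vertFiber E u ×ˢ vertFiber E v, ψ (s * (z.1 + z.2))‖ ^ 2 := by
      intro s
      rw [← mul_pow, ← norm_mul]
      simp only [f]
      rw [Finset.sum_mul_sum, Finset.sum_product]
      simp_rw [mul_add, AddChar.map_add_eq_mul]
    simp_rw [e2]
    rw [this]
    congr 2
    unfold additiveEnergyPQ
    refine Finset.card_bij' (fun z _ => ((z.1.1, z.2.1), (z.1.2, z.2.2)))
      (fun z _ => ((z.1.1, z.2.1), (z.1.2, z.2.2))) ?_ ?_ ?_ ?_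
    · intro z hz
      simp only [Finset.mem_filter, Finset.mem_product] at hz ⊢
      tauto
    · intro z hz
      simp only [Finset.mem_filter, Finset.mem_product] at hz ⊢
      tauto
    · intro z hz
      rfl
    · intro z hz
      rfl
  have hsum : (∑ s : F, ‖N s‖ ^ 2 : ℝ) ≤ (E.card : ℝ) ^ 4 +
      (Fintype.card F : ℝ) * ((Fintype.card F : ℝ) * (fiberEnergy E : ℝ)) := by
    rw [← hE, ← hN0, Finset.mul_sum, ← Finset.add_sum_erase _ _ (Finset.mem_univ (0 : F))]
    gcongr
    refine (Finset.sum_le_sum fun s hs => hNs s (Finset.ne_of_mem_erase hs)).trans ?_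
    refine Finset.sum_le_sum_of_subset_of_nonneg (Finset.erase_subset _ _) fun s _ _ => ?_
    positivity
  rw [hP] at hsum
  rw [← mul_le_mul_iff_right₀ hq0, mul_add, mul_div_cancel₀ _ hq0.ne']
  exact hsum
end

section
/- Let q be an odd prime power, let H ⊆ F_q be a subfield, and let V ⊆ F_q be an additive subgroup with H ⊆ V. Set E := H×V ⊆ F_q². Then Δ_P(E) = V; in particular |Δ_P(E)| = |V|. -/
theorem subfield_subgroup_construction
    {F : Type*} [Field F] [Fintype F]
    (hq : Odd (Fintype.card F))
    (H : Subfield F) (V : AddSubgroup F) (hHV : (H : Set F) ⊆ (V : Set F)) :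
    {t : F | ∃ x ∈ (H : Set F) ×ˢ (V : Set F), ∃ y ∈ (H : Set F) ×ˢ (V : Set F),
        (x.2 - y.2) + (x.1 - y.1) ^ 2 = t} = (V : Set F) ∧
    Nat.card {t : F | ∃ x ∈ (H : Set F) ×ˢ (V : Set F), ∃ y ∈ (H : Set F) ×ˢ (V : Set F),
        (x.2 - y.2) + (x.1 - y.1) ^ 2 = t} = Nat.card V := by
  have key : {t : F | ∃ x ∈ (H : Set F) ×ˢ (V : Set F), ∃ y ∈ (H : Set F) ×ˢ (V : Set F),
        (x.2 - y.2) + (x.1 - y.1) ^ 2 = t} = (V : Set F) := by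
    ext t
    constructor
    · rintro ⟨x, ⟨hx1, hx2⟩, y, ⟨hy1, hy2⟩, rfl⟩
      exact V.add_mem (V.sub_mem hx2 hy2) (hHV (H.pow_mem (H.sub_mem hx1 hy1) 2))
    · intro ht
      exact ⟨(0, t), ⟨H.zero_mem, ht⟩, (0, 0), ⟨H.zero_mem, V.zero_mem⟩, by simp⟩
  refine ⟨key, ?_⟩
  rw [key]
  rfl
end
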